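/- With the multipath routing state space M, distance d, and best-response operator σ defined from a finite graph G with destination d and a strictly inflationary preorder ⪯ on the set 𝒫 of simple paths to d: (M, d) coincides with the product ultrametric space ∏_{p ∈ 𝒫} (M_p, d_p), where M_p = {∅, {p}} and d_p(∅, {p}) = h(p), i.e. d(m, n) = max_{p ∈ 𝒫} d_p(m ∩ {p}, n ∩ {p}); consequently σ, regarded as an operator on this product with one component per path p ∈ 𝒫, is an asynchronously contracting operator. -/

import Mathlib

/-!
The component of `bestResp pre x` at a path `q` depends only on the presence in `x` of paths
strictly preferred to `q`: if `q = (i j) p` then `p ≺ q` by strict inflation, and a competitor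
`b = (i k) p'` excludes `q` only if `b ≺ q`, whence `p' ≺ b ≺ q` (`bestResp_congr`). There are
finitely many simple paths, so `≺` is well founded.

Any operator on a finite product whose components depend only on strictly smaller components with
respect to a well-founded relation is an ACO (`isACO_of_wellFounded`). The unique fixed point is
given by well-founded recursion. For asynchronous convergence, argue by well-founded induction on
the component `q`: once all smaller components have stabilised, admissibility makes every
sufficiently late activation of `q` read only stabilised values, so it computes the value of the
fixed point, and so do all later activations.

For the distances, the range of `p ↦ d_p (m, n)` and the set of heights over the symmetric
difference agree up to the value `0`, which does not affect a supremum in `ℕ`.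
-/

/-- A simple path in the directed graph with vertex set `V` and arc relation `E`,
ending at the destination `dest`: a duplicate-free nonempty list of vertices,
consecutive vertices joined by arcs, whose last vertex is `dest`.  The empty path
`ε` at `dest` is represented by the list `[dest]`. -/
structure SimplePath (V : Type*) (E : V → V → Prop) (dest : V) where
  verts : List V
  ends : verts.getLast? = some dest
  nodup : verts.Nodup
  chain : verts.Chain' E

variable {V : Type*} {E : V → V → Prop} {dest : V}

/-- The candidate paths at node `i` given a state `x`: the simple paths of the
form `(i j) p` where `(i, j)` is an arc and `p ∈ x` is a path with source `j`. -/
def cand (x : Set (SimplePath V E dest)) (i : V) : Set (SimplePath V E dest) :=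
  {q | ∃ p ∈ x, ∃ j, p.verts.head? = some j ∧ E i j ∧ q.verts = i :: p.verts}

/-- The minimal (most preferred) elements of a set of paths, with respect to the
strict part `≺` of the preference preorder `⪯`:
`min A = {a ∈ A : no b ∈ A has b ≺ a}`. -/
def minSet {P : Type*} (pre : P → P → Prop) (A : Set P) : Set P :=
  {a | a ∈ A ∧ ∀ b ∈ A, ¬ (pre b a ∧ ¬ pre a b)}

/-- The myopic best-response operator on the multipath routing state space
(states are identified with sets of simple paths to `dest`): the component of
`σ x` at `dest` is `{ε}`, and the component at `i ≠ dest` is the set of minimal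
candidate paths at `i`. -/
def bestResp (pre : SimplePath V E dest → SimplePath V E dest → Prop)
    (x : Set (SimplePath V E dest)) : Set (SimplePath V E dest) :=
  {q | q.verts = [dest] ∨ ∃ i, i ≠ dest ∧ q ∈ minSet pre (cand x i)}

/-- The height of a path: `h p = |{q : p ⪯ q}|`, the number of paths that `p` is
weakly preferred to be below. -/
noncomputable def hval (pre : SimplePath V E dest → SimplePath V E dest → Prop)
    (p : SimplePath V E dest) : ℕ :=
  Nat.card {q : SimplePath V E dest // pre p q}

/-- The ultrametric distance on states: the maximum of `h` over the symmetric
difference `(m \ n) ∪ (n \ m)` (equal to `0` when the symmetric difference is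
empty). -/
noncomputable def pathDist (pre : SimplePath V E dest → SimplePath V E dest → Prop)
    (m n : Set (SimplePath V E dest)) : ℕ :=
  sSup (hval pre '' ((m \ n) ∪ (n \ m)))

/-- The preference preorder `⪯` is strictly inflationary: any simple path `p`
(from `j` to `dest`) is strictly preferred to any simple one-arc extension
`(i j) p` of it. -/
def StrictlyInflationary (pre : SimplePath V E dest → SimplePath V E dest → Prop) : Prop :=
  ∀ (p : SimplePath V E dest) (i j : V), p.verts.head? = some j → E i j →
    ∀ q : SimplePath V E dest, q.verts = i :: p.verts → pre p q ∧ ¬ pre q p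

open Classical in
/-- The component ultrametric for the path `p`: the component space is
`M_p = {∅, {p}}` (recording whether `p` is present in the state), with
`d_p (∅, {p}) = h p`; thus `d_p (m ∩ {p}) (n ∩ {p})` is `0` if `p ∈ m ↔ p ∈ n`
and `h p` otherwise. -/
noncomputable def compDist (pre : SimplePath V E dest → SimplePath V E dest → Prop)
    (p : SimplePath V E dest) (m n : Set (SimplePath V E dest)) : ℕ :=
  if p ∈ m ↔ p ∈ n then 0 else hval pre p

/-- An asynchronous execution schedule `(α, β)` on processors indexed by `ι` is
admissible if every processor activates infinitely often, information does not
propagate backwards in time, and each past data value is used only finitely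
often. -/
def Admissible {ι : Type*} (α : ℕ → Set ι) (β : ℕ → ι → ι → ℕ) : Prop :=
  (∀ (i : ι) (t : ℕ), ∃ t' > t, i ∈ α t') ∧
  (∀ t > 0, ∀ i j : ι, β t i j < t) ∧
  (∀ (i j : ι) (t' : ℕ), ∃ tf : ℕ, ∀ t > tf, β t i j ≠ t')

/-- `x : ℕ → ∀ i, M i` is the asynchronous iteration of `σ` from starting point
`m` under the schedule `(α, β)`: `x 0 = m`; at time `t > 0` an inactive processor
keeps its value, and an active processor `i` recomputes its component of `σ`
applied to the (possibly outdated) values `x (β t i j) j`. -/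
def IsAsyncIter {ι : Type*} {M : ι → Type*} (σ : (∀ i, M i) → (∀ i, M i))
    (m : ∀ i, M i) (α : ℕ → Set ι) (β : ℕ → ι → ι → ℕ)
    (x : ℕ → ∀ i, M i) : Prop :=
  x 0 = m ∧ ∀ t > 0, ∀ i : ι,
    (i ∉ α t → x t i = x (t - 1) i) ∧
    (i ∈ α t → x t i = σ (fun j => x (β t i j) j) i)

/-- `σ` is an asynchronously contracting operator (ACO): it has a unique fixed
point `m*`, and for every admissible schedule and every starting point, the
asynchronous iterates are eventually equal to `m*`. -/
def IsACO {ι : Type*} {M : ι → Type*} (σ : (∀ i, M i) → (∀ i, M i)) : Prop :=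
  ∃ mstar : ∀ i, M i, (σ mstar = mstar ∧ ∀ y, σ y = y → y = mstar) ∧
    ∀ (α : ℕ → Set ι) (β : ℕ → ι → ι → ℕ), Admissible α β →
      ∀ (m : ∀ i, M i) (x : ℕ → ∀ i, M i), IsAsyncIter σ m α β x →
        ∃ T : ℕ, ∀ t > T, x t = mstar

theorem finite_simplePath [Finite V] : Finite (SimplePath V E dest) := by
  classical
  have := Fintype.ofFinite V
  refine Finite.of_injective
    (fun p : SimplePath V E dest => (⟨p.verts, p.nodup⟩ : {l : List V // l.Nodup})) ?_
  rintro ⟨v, _, _, _⟩ ⟨w, _, _, _⟩ h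
  simp only [Subtype.mk.injEq] at h
  subst h
  rfl

/-- Under an admissible schedule, the data read by a fixed processor `i` from all processors is
eventually more recent than any given time. -/
theorem Admissible.eventually_recent {ι : Type*} [Finite ι] {α : ℕ → Set ι} {β : ℕ → ι → ι → ℕ}
    (hadm : Admissible α β) (i : ι) (T : ℕ) : ∃ T', ∀ t > T', ∀ j, T < β t i j := by
  choose tf htf using hadm.2.2 i
  have hbound : (Set.range fun p : ι × Fin (T + 1) => tf p.1 p.2).Finite := Set.finite_range _
  obtain ⟨T', hT'⟩ := hbound.bddAbove
  refine ⟨T', fun t ht j => ?_⟩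
  by_contra hle
  have hlt : β t i j < T + 1 := by omega
  have h1 : tf j (β t i j) ≤ T' := hT' ⟨(j, ⟨β t i j, hlt⟩), rfl⟩
  exact htf j (β t i j) t (by omega) rfl

/-- An operator on a finite product, each of whose components depends only on components strictly
below it in a well-founded relation, is an ACO. -/
theorem isACO_of_wellFounded {ι : Type*} [Finite ι] {M : ι → Type*} [∀ i, Nonempty (M i)]
    (σ : (∀ i, M i) → (∀ i, M i)) (r : ι → ι → Prop) (hr : WellFounded r)
    (hloc : ∀ (x y : ∀ i, M i) (i : ι), (∀ j, r j i → x j = y j) → σ x i = σ y i) :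
    IsACO σ := by
  classical
  -- Components not below `i` are filled in arbitrarily: `σ` ignores them at `i`.
  let F : ∀ i, (∀ j, r j i → M j) → M i := fun i rec =>
    σ (fun j => if h : r j i then rec j h else Classical.arbitrary (M j)) i
  let mstar : ∀ i, M i := hr.fix F
  have hfix : ∀ i, σ mstar i = mstar i := by
    intro i
    have h1 : mstar i = F i (fun j _ => mstar j) := hr.fix_eq F i
    rw [h1]
    apply hloc
    intro j hj
    simp [hj]
  refine ⟨mstar, ⟨funext hfix, ?_⟩, ?_⟩
  · intro y hy
    funext i
    induction i using hr.induction with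
    | _ i ih => rw [← hfix i, ← congrFun hy i]; exact hloc _ _ _ ih
  · intro α β hadm m x hx
    have key : ∀ i, ∃ T, ∀ t > T, x t i = mstar i := by
      intro i
      induction i using hr.induction with
      | _ i ih =>
        have ih' : ∀ j, ∃ T, r j i → ∀ t > T, x t j = mstar j := by
          intro j
          by_cases hj : r j i
          · obtain ⟨T, hT⟩ := ih j hj
            exact ⟨T, fun _ => hT⟩
          · exact ⟨0, fun h => absurd h hj⟩
        choose T hT using ih'
        obtain ⟨T₀, hT₀⟩ := (Set.finite_range T).bddAbove
        obtain ⟨T₁, hT₁⟩ := hadm.eventually_recent i T₀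
        have hact : ∀ t > T₁, i ∈ α t → x t i = mstar i := by
          intro t ht hit
          rw [((hx.2 t (by omega) i).2 hit), ← hfix i]
          apply hloc
          intro j hj
          exact hT j hj _ (lt_of_le_of_lt (hT₀ ⟨j, rfl⟩) (hT₁ t ht j))
        obtain ⟨s, hs, his⟩ := hadm.1 i T₁
        have hafter : ∀ t, s ≤ t → x t i = mstar i := by
          intro t ht
          induction t, ht using Nat.le_induction with
          | base => exact hact s hs his
          | succ t ht iht =>
            by_cases hit : i ∈ α (t + 1)
            · exact hact _ (by omega) hit
            · rw [(hx.2 (t + 1) (by omega) i).1 hit]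
              exact iht
        exact ⟨s, fun t ht => hafter t ht.le⟩
    choose T hT using key
    obtain ⟨T₀, hT₀⟩ := (Set.finite_range T).bddAbove
    exact ⟨T₀, fun t ht => funext fun i => hT i t (lt_of_le_of_lt (hT₀ ⟨i, rfl⟩) ht)⟩

/-- One direction of the locality of best response: if `x` and `y` agree on the paths strictly
preferred to `q`, membership of `q` transfers from `bestResp pre x` to `bestResp pre y`. -/
theorem bestResp_imp (pre : SimplePath V E dest → SimplePath V E dest → Prop)
    (htrans : ∀ p q r, pre p q → pre q r → pre p r) (hinfl : StrictlyInflationary pre)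
    (x y : Set (SimplePath V E dest)) (q : SimplePath V E dest)
    (hxy : ∀ p, pre p q ∧ ¬ pre q p → (p ∈ x ↔ p ∈ y)) (hq : q ∈ bestResp pre x) :
    q ∈ bestResp pre y := by
  rcases hq with hq | ⟨i, hi, ⟨p, hp, j, hj, hE, hv⟩, hmin⟩
  · exact Or.inl hq
  · refine Or.inr ⟨i, hi, ⟨p, (hxy p (hinfl p i j hj hE q hv)).1 hp, j, hj, hE, hv⟩, ?_⟩
    rintro b ⟨p', hp', k, hk, hE', hv'⟩ ⟨hbq, hqb⟩
    obtain ⟨h1, -⟩ := hinfl p' i k hk hE' b hv'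
    have hx : p' ∈ x :=
      (hxy p' ⟨htrans _ _ _ h1 hbq, fun h => hqb (htrans _ _ _ h h1)⟩).2 hp'
    exact hmin b ⟨p', hx, k, hk, hE', hv'⟩ ⟨hbq, hqb⟩

theorem bestResp_congr (pre : SimplePath V E dest → SimplePath V E dest → Prop)
    (htrans : ∀ p q r, pre p q → pre q r → pre p r) (hinfl : StrictlyInflationary pre)
    (x y : Set (SimplePath V E dest)) (q : SimplePath V E dest)
    (hxy : ∀ p, pre p q ∧ ¬ pre q p → (p ∈ x ↔ p ∈ y)) :
    q ∈ bestResp pre x ↔ q ∈ bestResp pre y :=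
  ⟨bestResp_imp pre htrans hinfl x y q hxy,
    bestResp_imp pre htrans hinfl y x q fun p hp => (hxy p hp).symm⟩

theorem wellFounded_strict {P : Type*} [Finite P] (pre : P → P → Prop)
    (htrans : ∀ p q r, pre p q → pre q r → pre p r) :
    WellFounded fun p q => pre p q ∧ ¬ pre q p := by
  have : IsTrans P fun p q => pre p q ∧ ¬ pre q p :=
    ⟨fun a b c hab hbc => ⟨htrans _ _ _ hab.1 hbc.1, fun h => hab.2 (htrans _ _ _ hbc.1 h)⟩⟩
  have : Std.Irrefl fun p q : P => pre p q ∧ ¬ pre q p := ⟨fun a h => h.2 h.1⟩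
  exact Finite.wellFounded_of_trans_of_irrefl _

/-- The product formula for the distance. Finiteness of the path set makes both sets of values bounded, so that
neither supremum takes a junk value. -/
theorem pathDist_eq_sSup_compDist [Finite (SimplePath V E dest)]
    (pre : SimplePath V E dest → SimplePath V E dest → Prop) (m n : Set (SimplePath V E dest)) :
    pathDist pre m n = sSup (Set.range fun p => compDist pre p m n) := by
  have hb1 : BddAbove (hval pre '' ((m \ n) ∪ (n \ m))) := (Set.toFinite _).bddAbove
  have hb2 : BddAbove (Set.range fun p => compDist pre p m n) := (Set.finite_range _).bddAbove
  have hne : (Set.range fun p => compDist pre p m n).Nonempty :=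
    ⟨_, ⟨⟨[dest], by simp, by simp, List.isChain_singleton _⟩, rfl⟩⟩
  unfold pathDist
  apply le_antisymm
  · rcases (hval pre '' ((m \ n) ∪ (n \ m))).eq_empty_or_nonempty with h | h
    · simp [h]
    · refine csSup_le h ?_
      rintro _ ⟨p, hp, rfl⟩
      refine le_csSup hb2 ⟨p, ?_⟩
      have : ¬ (p ∈ m ↔ p ∈ n) := by
        rcases hp with hp | hp
        · exact fun h => hp.2 (h.1 hp.1)
        · exact fun h => hp.2 (h.2 hp.1)
      simp [compDist, this]
  · refine csSup_le hne ?_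
    rintro _ ⟨p, rfl⟩
    by_cases h : p ∈ m ↔ p ∈ n
    · simp [compDist, h]
    · simp only [compDist, h, if_false]
      refine le_csSup hb1 ⟨p, ?_, rfl⟩
      by_cases hm : p ∈ m
      · exact Or.inl ⟨hm, fun hn => h ⟨fun _ => hn, fun _ => hm⟩⟩
      · exact Or.inr ⟨by_contra fun hn => h ⟨fun h' => absurd h' hm, fun h' => absurd h' hn⟩, hm⟩

/-- for a finite graph with destination `dest` and a strictly
inflationary preference preorder on the simple paths to `dest`, the routing
ultrametric `d` coincides with the product over all paths `p` of the component
ultrametrics `d_p` (`d m n = max_p d_p (m ∩ {p}) (n ∩ {p})`), and consequently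
the best-response operator, regarded as an operator on the product with one
component (the presence or absence of `p`) per path `p`, is an asynchronously
contracting operator. -/
theorem bestResp_product_ACO {V : Type*} [Fintype V]
    {E : V → V → Prop} {dest : V}
    (pre : SimplePath V E dest → SimplePath V E dest → Prop)
    (hrefl : ∀ p, pre p p)
    (htrans : ∀ p q r, pre p q → pre q r → pre p r)
    (hinfl : StrictlyInflationary pre) :
    (∀ m n : Set (SimplePath V E dest),
      pathDist pre m n = sSup (Set.range fun p => compDist pre p m n)) ∧
    IsACO (ι := SimplePath V E dest) (M := fun _ => Prop) (bestResp pre) := by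
  have : Finite (SimplePath V E dest) := finite_simplePath
  refine ⟨pathDist_eq_sSup_compDist pre, ?_⟩
  refine isACO_of_wellFounded (M := fun _ => Prop) (bestResp pre) _
    (wellFounded_strict pre htrans) ?_
  intro x y q hxy
  exact propext (bestResp_congr pre htrans hinfl x y q fun p hp => iff_of_eq (hxy p hp))
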